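/- Given lenses (f, φ) : A ⇌ B and (g, γ) : C ⇌ B with the underlying functor g a discrete opfibration, the strict pullback category A ×_B C (objects: pairs (a, c) with f(a) = g(c); morphisms: pairs (u, v) with f(u) = g(v)), equipped with the projection lens to A (lifting ((a, c), u) ↦ (u, γ(c, f(u)))) and the projection lens to C, is a pullback in the category of small categories and lenses: for any lenses (p, ρ) : D ⇌ A and (q, κ) : D ⇌ C such that the composite of (p, ρ) with (f, φ) equals the composite of (q, κ) with (g, γ) as lenses, there exists a unique lens (h, θ) : D ⇌ A ×_B C whose composites with the two projection lenses equal (p, ρ) and (q, κ) respectively. -/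

import Mathlib

open CategoryTheory

universe u

/-- A functor `F` is a discrete opfibration if for every object `a` of its domain and
every morphism `u : F.obj a ⟶ b` of its codomain, there exists a unique morphism `w`
with domain `a` such that `F.map w = u` (up to the identification of codomains). -/
def IsDiscreteOpfibration {A B : Type u} [SmallCategory A] [SmallCategory B]
    (F : A ⥤ B) : Prop :=
  ∀ ⦃a : A⦄ ⦃b : B⦄ (u : F.obj a ⟶ b),
    ∃! w : Σ a' : A, a ⟶ a', ∃ h : F.obj w.1 = b, F.map w.2 = u ≫ eqToHom h.symm

/-- A (delta) lens between small categories: a functor together with a lifting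
operation satisfying the three lens axioms. `lift u` packages the codomain
`a'` of the chosen lift together with the lift `a ⟶ a'` itself. -/
structure Lens (A B : Type u) [SmallCategory A] [SmallCategory B] where
  /-- the underlying (Get) functor -/
  func : A ⥤ B
  /-- the lifting (Put) operation -/
  lift : ∀ ⦃a : A⦄ ⦃b : B⦄, (func.obj a ⟶ b) → Σ a' : A, a ⟶ a'
  /-- the codomain of the lift lies over the codomain of the lifted morphism -/
  lift_cod : ∀ ⦃a : A⦄ ⦃b : B⦄ (u : func.obj a ⟶ b), func.obj (lift u).1 = b
  /-- axiom (1): `f (φ (a, u)) = u` -/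
  lift_map : ∀ ⦃a : A⦄ ⦃b : B⦄ (u : func.obj a ⟶ b),
      func.map (lift u).2 = u ≫ eqToHom (lift_cod u).symm
  /-- axiom (2): `φ (a, 1) = 1` -/
  lift_id : ∀ a : A, lift (𝟙 (func.obj a)) = ⟨a, 𝟙 a⟩
  /-- axiom (3): `φ (a, v ∘ u) = φ (a', v) ∘ φ (a, u)` -/
  lift_comp : ∀ ⦃a : A⦄ ⦃b c : B⦄ (u : func.obj a ⟶ b) (v : b ⟶ c),
      lift (u ≫ v) = ⟨(lift (eqToHom (lift_cod u) ≫ v)).1,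
        (lift u).2 ≫ (lift (eqToHom (lift_cod u) ≫ v)).2⟩

namespace Lens

variable {A B C : Type u} [SmallCategory A] [SmallCategory B] [SmallCategory C]

theorem lift_eqToHom (L : Lens A B) {a a' : A} (h : a' = a) {b : B}
    (u : L.func.obj a ⟶ b) (h' : L.func.obj a' = L.func.obj a) :
    L.lift (eqToHom h' ≫ u) = ⟨(L.lift u).1, eqToHom h ≫ (L.lift u).2⟩ := by
  subst h; simp

/-- The identity lens on a small category. -/
def id (A : Type u) [SmallCategory A] : Lens A A where
  func := Functor.id A
  lift _ b u := ⟨b, u⟩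
  lift_cod _ _ _ := rfl
  lift_map := by intros; simp
  lift_id := by intros; rfl
  lift_comp := by intros; simp

/-- Composition of lenses: `(L.comp M).lift u = L.lift ((M.lift u).2)`. -/
def comp (L : Lens A B) (M : Lens B C) : Lens A C where
  func := L.func ⋙ M.func
  lift _ _ u := L.lift (M.lift u).2
  lift_cod a c u := by
    show M.func.obj (L.func.obj _) = c
    rw [L.lift_cod]
    exact M.lift_cod u
  lift_map a c u := by
    show M.func.map (L.func.map _) = _
    rw [L.lift_map, Functor.map_comp, M.lift_map, eqToHom_map]
    simp
  lift_id a := by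
    show L.lift (M.lift (𝟙 (M.func.obj (L.func.obj a)))).2 = _
    rw [M.lift_id]
    exact L.lift_id a
  lift_comp a c c' u v := by
    show L.lift (M.lift (u ≫ v)).2 = _
    rw [M.lift_comp u v]
    show L.lift ((M.lift u).2 ≫ (M.lift (eqToHom (M.lift_cod u) ≫ v)).2) = _
    rw [L.lift_comp]
    have key : M.lift (eqToHom (show (L.func ⋙ M.func).obj (L.lift (M.lift u).2).1 = c by
          show M.func.obj (L.func.obj _) = c; rw [L.lift_cod]; exact M.lift_cod u) ≫ v)
        = ⟨(M.lift (eqToHom (M.lift_cod u) ≫ v)).1,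
            eqToHom (L.lift_cod (M.lift u).2) ≫ (M.lift (eqToHom (M.lift_cod u) ≫ v)).2⟩ := by
      rw [show (eqToHom (show (L.func ⋙ M.func).obj (L.lift (M.lift u).2).1 = c by
          show M.func.obj (L.func.obj _) = c; rw [L.lift_cod]; exact M.lift_cod u) ≫ v)
        = eqToHom (congrArg M.func.obj (L.lift_cod (M.lift u).2)) ≫ (eqToHom (M.lift_cod u) ≫ v) by
          rw [← Category.assoc, eqToHom_trans]]
      exact M.lift_eqToHom (L.lift_cod (M.lift u).2) _ _
    beta_reduce
    rw [key]

/-- A lens is a monomorphism in the category of small categories and lenses if it is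
left-cancellable with respect to lens composition. -/
def IsMono (f : Lens A B) : Prop :=
  ∀ ⦃D : Type u⦄ [SmallCategory D], ∀ x y : Lens D A, x.comp f = y.comp f → x = y

/-- A lens is an epimorphism in the category of small categories and lenses if it is
right-cancellable with respect to lens composition. -/
def IsEpi (f : Lens A B) : Prop :=
  ∀ ⦃C : Type u⦄ [SmallCategory C], ∀ x y : Lens B C, f.comp x = f.comp y → x = y

end Lens
/-- The strict pullback category of two functors: objects are pairs `(a, c)` with
`f.obj a = g.obj c`, morphisms are pairs `(u, v)` with `f.map u = g.map v`
(modulo the identification of endpoints). -/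
def CatPullback {A B C : Type u} [SmallCategory A] [SmallCategory B] [SmallCategory C]
    (f : A ⥤ B) (g : C ⥤ B) : Type u :=
  { p : A × C // f.obj p.1 = g.obj p.2 }

namespace CatPullback

variable {A B C : Type u} [SmallCategory A] [SmallCategory B] [SmallCategory C]
  {f : A ⥤ B} {g : C ⥤ B}

instance : SmallCategory (CatPullback f g) where
  Hom x y := { m : (x.1.1 ⟶ y.1.1) × (x.1.2 ⟶ y.1.2) //
      f.map m.1 ≫ eqToHom y.2 = eqToHom x.2 ≫ g.map m.2 }
  id x := ⟨(𝟙 _, 𝟙 _), by simp⟩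
  comp m n := ⟨(m.1.1 ≫ n.1.1, m.1.2 ≫ n.1.2), by
    rw [Functor.map_comp, Functor.map_comp, Category.assoc, n.2, ← Category.assoc, m.2,
      Category.assoc]⟩
  id_comp m := by apply Subtype.ext; simp
  comp_id m := by apply Subtype.ext; simp
  assoc m n k := by apply Subtype.ext; simp

/-- The first projection functor of the strict pullback. -/
def proj₁ : CatPullback f g ⥤ A where
  obj x := x.1.1
  map m := m.1.1

/-- The second projection functor of the strict pullback. -/
def proj₂ : CatPullback f g ⥤ C where
  obj x := x.1.2
  map m := m.1.2

end CatPullback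

/-!
A discrete opfibration induces a bijection between the morphisms out of `a` and those out of its
image, so the lifts of a lens over it are forced. Hence, if `P` lies over a discrete opfibration,
lenses `L` with `L.comp P = p` correspond to functorial factorizations of `p.func` through `P.func`:
the lift of `u` along `L` must be the lift of `P.func.map u` along `p`. Consequently a commutative
square of lenses whose sides `G` and `P₀` lie over discrete opfibrations inherits the universal
property of its underlying square of functors; the side condition `L.comp P₁ = q` may be checked
after composing with `G`, where it is the commutativity of the two squares.
-/

section Star

variable {A B : Type u} [SmallCategory A] [SmallCategory B]

/-- The action of a functor on the morphisms out of `a`: the analogue of `Prefunctor.star` for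
functors, phrasing unique and chosen lifts as equalities of dependent pairs. -/
def starMap (F : A ⥤ B) (a : A) (w : Quiver.Star a) : Quiver.Star (F.obj a) :=
  ⟨F.obj w.1, F.map w.2⟩

theorem starMap_eq_mk_iff (F : A ⥤ B) {a : A} {b : B} (w : Quiver.Star a) (u : F.obj a ⟶ b) :
    starMap F a w = ⟨b, u⟩ ↔ ∃ h : F.obj w.1 = b, F.map w.2 = u ≫ eqToHom h.symm := by
  constructor
  · rintro ⟨⟩
    exact ⟨rfl, (Category.comp_id _).symm⟩
  · rintro ⟨rfl, h⟩
    exact Sigma.ext rfl (heq_of_eq (h.trans (Category.comp_id u)))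

theorem isDiscreteOpfibration_iff_starMap_bijective (F : A ⥤ B) :
    IsDiscreteOpfibration F ↔ ∀ a, Function.Bijective (starMap F a) := by
  simp only [IsDiscreteOpfibration, Function.bijective_iff_existsUnique, Sigma.forall,
    starMap_eq_mk_iff]

theorem IsDiscreteOpfibration.starMap_injective {F : A ⥤ B} (hF : IsDiscreteOpfibration F) (a : A) :
    Function.Injective (starMap F a) :=
  ((isDiscreteOpfibration_iff_starMap_bijective F).mp hF a).injective

end Star

namespace Lens

variable {A B C D E : Type u} [SmallCategory A] [SmallCategory B] [SmallCategory C]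
  [SmallCategory D] [SmallCategory E]

theorem ext_of_lift_eq {L M : Lens A B} (hf : L.func = M.func)
    (hl : ∀ ⦃a : A⦄ ⦃b : B⦄ (u : L.func.obj a ⟶ b),
      L.lift u = M.lift (eqToHom (Functor.congr_obj hf a).symm ≫ u)) : L = M := by
  obtain ⟨f, l, _, _, _, _⟩ := L
  obtain ⟨g, m, _, _, _, _⟩ := M
  obtain rfl : f = g := hf
  obtain rfl : l = m := by
    funext a b u
    simpa using hl u
  rfl

theorem lift_eq_of_eq {L M : Lens A B} (h : L = M) {a : A} {b : B} (u : L.func.obj a ⟶ b) :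
    L.lift u = M.lift (eqToHom (congrArg (fun K : Lens A B => K.func.obj a) h).symm ≫ u) := by
  subst h
  simp

theorem lift_comp_eqToHom (L : Lens A B) {a : A} {b b' : B} (u : L.func.obj a ⟶ b)
    (e : b = b') : L.lift (u ≫ eqToHom e) = L.lift u := by
  subst e
  simp

theorem starMap_lift (L : Lens A B) {a : A} {b : B} (u : L.func.obj a ⟶ b) :
    starMap L.func a (L.lift u) = ⟨b, u⟩ :=
  (starMap_eq_mk_iff L.func _ u).mpr ⟨L.lift_cod u, L.lift_map u⟩

theorem lift_func_map (L : Lens A B) (hL : IsDiscreteOpfibration L.func) {a a' : A}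
    (w : a ⟶ a') : L.lift (L.func.map w) = ⟨a', w⟩ :=
  hL.starMap_injective a (L.starMap_lift _)

theorem comp_lift_func_map (L : Lens D A) (P : Lens A B) (hP : IsDiscreteOpfibration P.func)
    {d : D} {a : A} (u : L.func.obj d ⟶ a) :
    (L.comp P).lift (a := d) (P.func.map u) = L.lift u := by
  change L.lift (P.lift (P.func.map u)).2 = _
  rw [P.lift_func_map hP]

theorem eq_of_comp_eq {L M : Lens D A} (P : Lens A B) (hP : IsDiscreteOpfibration P.func)
    (hf : L.func = M.func) (h : L.comp P = M.comp P) : L = M := by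
  refine ext_of_lift_eq hf fun d a u => ?_
  rw [← comp_lift_func_map L P hP, ← comp_lift_func_map M P hP, Functor.map_comp, eqToHom_map]
  exact lift_eq_of_eq h (a := d) (P.func.map u)

theorem comp_assoc (L : Lens D A) (M : Lens A B) (N : Lens B C) :
    (L.comp M).comp N = L.comp (M.comp N) :=
  rfl

theorem func_obj_eq_of_comp_func_eq {P : Lens A B} {p : Lens D B} {H : D ⥤ A}
    (hH : H ⋙ P.func = p.func) (d : D) : p.func.obj d = P.func.obj (H.obj d) :=
  (Functor.congr_obj hH d).symm

section Factor

variable (P : Lens A B) (hP : IsDiscreteOpfibration P.func) (p : Lens D B) (H : D ⥤ A)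
  (hH : H ⋙ P.func = p.func)

include hP in
theorem starMap_lift_of_comp_func_eq {d : D} {a : A} (u : H.obj d ⟶ a) :
    starMap H d
      (p.lift (eqToHom (func_obj_eq_of_comp_func_eq hH d) ≫ P.func.map u)) = ⟨a, u⟩ := by
  apply hP.starMap_injective
  refine (starMap_eq_mk_iff P.func _ _).mpr
    ⟨(Functor.congr_obj hH _).trans (p.lift_cod _), ?_⟩
  simpa [starMap, p.lift_map] using Functor.congr_hom hH
    (p.lift (eqToHom (func_obj_eq_of_comp_func_eq hH d) ≫ P.func.map u)).2

/-- The factorization of a lens `p` through a lens `P` over a discrete opfibration, determined by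
a factorization `H` of the underlying functor: a morphism is lifted along `H` by lifting its image
under `P` along `p`. -/
def factor : Lens D A where
  func := H
  lift d _ u := p.lift (eqToHom (func_obj_eq_of_comp_func_eq hH d) ≫ P.func.map u)
  lift_cod _ _ u :=
    ((starMap_eq_mk_iff H _ u).mp (starMap_lift_of_comp_func_eq P hP p H hH u)).choose
  lift_map _ _ u :=
    ((starMap_eq_mk_iff H _ u).mp (starMap_lift_of_comp_func_eq P hP p H hH u)).choose_spec
  lift_id d := by
    rw [P.func.map_id, Category.comp_id, ← Category.id_comp (eqToHom _), p.lift_comp_eqToHom,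
      p.lift_id]
  lift_comp d _ _ u v := by
    rw [P.func.map_comp, ← Category.assoc, p.lift_comp, P.func.map_comp, eqToHom_map,
      eqToHom_trans_assoc]

theorem factor_comp : (factor P hP p H hH).comp P = p := by
  refine ext_of_lift_eq hH fun d b (u : P.func.obj (H.obj d) ⟶ b) => ?_
  change p.lift (eqToHom _ ≫ P.func.map (P.lift u).2) = _
  rw [P.lift_map, ← Category.assoc]
  exact p.lift_comp_eqToHom _ _

end Factor

theorem existsUnique_comp_eq {P₀ : Lens E A} {P₁ : Lens E C} {F : Lens A B} {G : Lens C B}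
    (hP₀ : IsDiscreteOpfibration P₀.func) (hG : IsDiscreteOpfibration G.func)
    (sq : P₀.comp F = P₁.comp G) {p : Lens D A} {q : Lens D C} (hpq : p.comp F = q.comp G)
    (hfunc : ∃! H : D ⥤ E, H ⋙ P₀.func = p.func ∧ H ⋙ P₁.func = q.func) :
    ∃! L : Lens D E, L.comp P₀ = p ∧ L.comp P₁ = q := by
  obtain ⟨H, ⟨hHp, hHq⟩, hunique⟩ := hfunc
  let L := factor P₀ hP₀ p H hHp
  have hLp : L.comp P₀ = p := factor_comp P₀ hP₀ p H hHp
  refine ⟨L, ⟨hLp, eq_of_comp_eq G hG hHq ?_⟩, ?_⟩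
  · calc (L.comp P₁).comp G = (L.comp P₀).comp F := by rw [comp_assoc, comp_assoc, sq]
      _ = q.comp G := by rw [hLp, hpq]
  · rintro M ⟨hMp, hMq⟩
    have hMH : M.func = H := hunique _ ⟨congrArg func hMp, congrArg func hMq⟩
    exact eq_of_comp_eq P₀ hP₀ hMH (hMp.trans hLp.symm)

theorem comp_eq_comp_of_starMap_lift {P₀ : Lens E A} {P₁ : Lens E C} {F : Lens A B} {G : Lens C B}
    (hP₀ : IsDiscreteOpfibration P₀.func) (hfunc : P₀.func ⋙ F.func = P₁.func ⋙ G.func)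
    (hlift : ∀ (x : E) (c : C) (v : P₁.func.obj x ⟶ c),
      starMap P₀.func x (P₁.lift v) =
        F.lift (eqToHom (Functor.congr_obj hfunc x) ≫ G.func.map v)) :
    P₀.comp F = P₁.comp G := by
  refine ext_of_lift_eq hfunc fun x b (u : F.func.obj (P₀.func.obj x) ⟶ b) =>
    hP₀.starMap_injective x ?_
  let u' : G.func.obj (P₁.func.obj x) ⟶ b := eqToHom (Functor.congr_obj hfunc x).symm ≫ u
  calc starMap P₀.func x (P₀.lift (F.lift u).2)
      = F.lift u := P₀.starMap_lift _
    _ = F.lift (eqToHom (Functor.congr_obj hfunc x) ≫ G.func.map (G.lift u').2) := by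
        rw [G.lift_map, ← Category.assoc, F.lift_comp_eqToHom, eqToHom_trans_assoc, eqToHom_refl]
        exact congrArg (F.lift (a := P₀.func.obj x) (b := b)) (Category.id_comp u).symm
    _ = starMap P₀.func x (P₁.lift (G.lift u').2) := (hlift x _ _).symm

end Lens

namespace CatPullback

variable {A B C D : Type u} [SmallCategory A] [SmallCategory B] [SmallCategory C]
  [SmallCategory D] {f : A ⥤ B} {g : C ⥤ B}

theorem hom_ext {x y : CatPullback f g} {m n : x ⟶ y} (h₁ : proj₁.map m = proj₁.map n)
    (h₂ : proj₂.map m = proj₂.map n) : m = n :=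
  Subtype.ext (Prod.ext h₁ h₂)

theorem star_ext {x : CatPullback f g} {w w' : Quiver.Star x}
    (h₁ : starMap proj₁ x w = starMap proj₁ x w')
    (h₂ : starMap proj₂ x w = starMap proj₂ x w') : w = w' := by
  obtain ⟨⟨⟨_, _⟩, _⟩, ⟨⟨_, _⟩, _⟩⟩ := w
  obtain ⟨⟨⟨_, _⟩, _⟩, ⟨⟨_, _⟩, _⟩⟩ := w'
  cases h₁
  cases h₂
  rfl

theorem obj_condition (x : CatPullback f g) : f.obj (proj₁.obj x) = g.obj (proj₂.obj x) :=
  x.2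

theorem map_condition {x y : CatPullback f g} (m : x ⟶ y) :
    f.map (proj₁.map m) ≫ eqToHom (obj_condition y) =
      eqToHom (obj_condition x) ≫ g.map (proj₂.map m) :=
  m.2

theorem condition : (proj₁ : CatPullback f g ⥤ A) ⋙ f = proj₂ ⋙ g :=
  CategoryTheory.Functor.ext obj_condition fun x y m => by
    rw [← Category.assoc, ← comp_eqToHom_iff]
    exact map_condition m

theorem functor_ext {H K : D ⥤ CatPullback f g} (h₁ : H ⋙ proj₁ = K ⋙ proj₁)
    (h₂ : H ⋙ proj₂ = K ⋙ proj₂) : H = K := by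
  have hobj (d : D) : H.obj d = K.obj d :=
    Subtype.ext (Prod.ext (Functor.congr_obj h₁ d) (Functor.congr_obj h₂ d))
  refine CategoryTheory.Functor.ext hobj fun d d' w => hom_ext ?_ ?_
  · simpa [eqToHom_map] using Functor.congr_hom h₁ w
  · simpa [eqToHom_map] using Functor.congr_hom h₂ w

/-- The functor into the strict pullback induced by a commutative square. -/
def pair (p : D ⥤ A) (q : D ⥤ C) (h : p ⋙ f = q ⋙ g) : D ⥤ CatPullback f g where
  obj d := ⟨(p.obj d, q.obj d), Functor.congr_obj h d⟩
  map w := ⟨(p.map w, q.map w), by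
    rw [comp_eqToHom_iff, Category.assoc]
    exact Functor.congr_hom h w⟩
  map_id d := hom_ext (p.map_id d) (q.map_id d)
  map_comp v w := hom_ext (p.map_comp v w) (q.map_comp v w)

theorem existsUnique_functor (p : D ⥤ A) (q : D ⥤ C) (h : p ⋙ f = q ⋙ g) :
    ∃! H : D ⥤ CatPullback f g, H ⋙ proj₁ = p ∧ H ⋙ proj₂ = q :=
  ⟨pair p q h, ⟨rfl, rfl⟩, fun _ hK => functor_ext hK.1 hK.2⟩

theorem starMap_starMap_proj₂ {x : CatPullback f g} (w : Quiver.Star x) :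
    starMap g _ (starMap proj₂ x w) =
      ⟨f.obj (proj₁.obj w.1), eqToHom (obj_condition x).symm ≫ f.map (proj₁.map w.2)⟩ := by
  refine (starMap_eq_mk_iff g _ _).mpr ⟨(obj_condition w.1).symm, ?_⟩
  rw [Category.assoc, ← eqToHom_comp_iff (obj_condition x)]
  exact (map_condition w.2).symm

theorem isDiscreteOpfibration_proj₁ (hg : IsDiscreteOpfibration g) :
    IsDiscreteOpfibration (proj₁ : CatPullback f g ⥤ A) := by
  refine (isDiscreteOpfibration_iff_starMap_bijective _).mpr fun x => ⟨fun w w' h => ?_, ?_⟩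
  · refine star_ext h (hg.starMap_injective _ ?_)
    rw [starMap_starMap_proj₂, starMap_starMap_proj₂]
    exact congrArg (fun s : Quiver.Star (proj₁.obj x) =>
      (⟨f.obj s.1, eqToHom (obj_condition x).symm ≫ f.map s.2⟩ :
        Quiver.Star (g.obj (proj₂.obj x)))) h
  · rintro ⟨a, u⟩
    obtain ⟨⟨c, v⟩, ⟨e, hv⟩, -⟩ := hg (eqToHom (obj_condition x).symm ≫ f.map u)
    have huv : f.map u ≫ eqToHom e.symm = eqToHom (obj_condition x) ≫ g.map v :=
      ((eqToHom_comp_iff _ _ _).mpr (hv.trans (Category.assoc _ _ _))).symm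
    exact ⟨⟨⟨(a, c), e.symm⟩, ⟨(u, v), huv⟩⟩, rfl⟩

theorem proj_comp_eq_comp {F : Lens A B} {G : Lens C B}
    {P₀ : Lens (CatPullback F.func G.func) A} (h₀ : P₀.func = proj₁)
    {P₁ : Lens (CatPullback F.func G.func) C} (h₁ : P₁.func = proj₂)
    (hP₀ : IsDiscreteOpfibration P₀.func)
    (hlift : ∀ (x : CatPullback F.func G.func) (c : C) (v : proj₂.obj x ⟶ c),
      starMap proj₁ x (P₁.lift (eqToHom (Functor.congr_obj h₁ x) ≫ v)) =
        F.lift (eqToHom (obj_condition x) ≫ G.func.map v)) :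
    P₀.comp F = P₁.comp G := by
  obtain ⟨f₀, _, _, _, _, _⟩ := P₀
  obtain ⟨f₁, _, _, _, _, _⟩ := P₁
  obtain rfl : f₀ = proj₁ := h₀
  obtain rfl : f₁ = proj₂ := h₁
  refine Lens.comp_eq_comp_of_starMap_lift hP₀ condition fun x c v => ?_
  simpa using! hlift x c v

end CatPullback

/-- If `G : C ⇌ B` has underlying functor a discrete opfibration, then the strict
pullback of the underlying functors of `F : A ⇌ B` and `G`, equipped with the canonical
projection lenses, is a pullback in the category of small categories and lenses. -/
theorem lens_pullback_along_dopf {A B C : Type u}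
    [SmallCategory A] [SmallCategory B] [SmallCategory C]
    (F : Lens A B) (G : Lens C B) (hG : IsDiscreteOpfibration G.func)
    (P₀ : Lens (CatPullback F.func G.func) A)
    (h₀ : P₀.func = CatPullback.proj₁)
    (P₁ : Lens (CatPullback F.func G.func) C)
    (h₁ : P₁.func = CatPullback.proj₂)
    (hlift₀ : ∀ (x : CatPullback F.func G.func) (a' : A) (u : x.1.1 ⟶ a'),
      P₀.lift (eqToHom (Functor.congr_obj h₀ x) ≫ u) =
        ⟨⟨(a', (G.lift (eqToHom x.2.symm ≫ F.func.map u)).1),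
            (G.lift_cod (eqToHom x.2.symm ≫ F.func.map u)).symm⟩,
          ⟨(u, (G.lift (eqToHom x.2.symm ≫ F.func.map u)).2),
            by rw [G.lift_map]; simp⟩⟩)
    (hlift₁ : ∀ (x : CatPullback F.func G.func) (c' : C) (v : x.1.2 ⟶ c'),
      P₁.lift (eqToHom (Functor.congr_obj h₁ x) ≫ v) =
        ⟨⟨((F.lift (eqToHom x.2 ≫ G.func.map v)).1, c'),
            F.lift_cod (eqToHom x.2 ≫ G.func.map v)⟩,
          ⟨((F.lift (eqToHom x.2 ≫ G.func.map v)).2, v),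
            by rw [F.lift_map]; simp⟩⟩) :
    ∀ (D : Type u) [SmallCategory D] (p : Lens D A) (q : Lens D C),
      p.comp F = q.comp G →
      ∃! h : Lens D (CatPullback F.func G.func), h.comp P₀ = p ∧ h.comp P₁ = q := by
  intro D _ p q hpq
  have hP₀ : IsDiscreteOpfibration P₀.func := h₀ ▸ CatPullback.isDiscreteOpfibration_proj₁ hG
  have sq : P₀.comp F = P₁.comp G :=
    CatPullback.proj_comp_eq_comp h₀ h₁ hP₀ fun x c v =>
      congrArg (starMap CatPullback.proj₁ x) (hlift₁ x c v)
  refine Lens.existsUnique_comp_eq hP₀ hG sq hpq ?_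
  rw [h₀, h₁]
  exact CatPullback.existsUnique_functor p.func q.func (congrArg Lens.func hpq)
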